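/- For an integer p ≥ 2, the abelianization of the group Γ_p is infinite cyclic, i.e. isomorphic to ℤ. -/

import Mathlib

/-- The relators of the group `Γ_p`: in the free group on four generators
`u = 0`, `v = 1`, `x = 2`, `y = 3`, the relators are `u^p v^(p+1)`,
`x^p y^(p+1)`, `(uv)(xy)⁻¹` and `(vu)(yx)⁻¹`. -/
def GammaRels (p : ℕ) : Set (FreeGroup (Fin 4)) :=
  { FreeGroup.of 0 ^ p * FreeGroup.of 1 ^ (p + 1),
    FreeGroup.of 2 ^ p * FreeGroup.of 3 ^ (p + 1),
    (FreeGroup.of 0 * FreeGroup.of 1) * (FreeGroup.of 2 * FreeGroup.of 3)⁻¹,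
    (FreeGroup.of 1 * FreeGroup.of 0) * (FreeGroup.of 3 * FreeGroup.of 2)⁻¹ }

/-- The group `Γ_p = ⟨u, v, x, y | u^p v^(p+1) = 1, x^p y^(p+1) = 1, uv = xy, vu = yx⟩`. -/
abbrev Gamma (p : ℕ) : Type := PresentedGroup (GammaRels p)

/-!
Let `φ` be a homomorphism from `Γ_p` to a commutative group and `t = φ (u * v) = φ (x * y)`. The
image of the relation `u ^ p * v ^ (p + 1) = 1` reads `t ^ p * φ v = 1`, so `φ v = t ^ (-p)` and
`φ u = t ^ (p + 1)`; likewise for `x` and `y`. Conversely, giving `u` and `x` weight `p + 1` and `v`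
and `y` weight `-p` respects the relators and gives `u * v` weight `1`.
-/

section Commute

variable {M : Type*} [Monoid M] {a b : M} {n : ℕ}

lemma mul_pow_mul_right_eq_one_of_commute (hab : Commute a b) (h : a ^ n * b ^ (n + 1) = 1) :
    (a * b) ^ n * b = 1 := by
  rw [hab.mul_pow, mul_assoc, ← pow_succ, h]

lemma mul_pow_succ_eq_left_of_commute (hab : Commute a b) (h : a ^ n * b ^ (n + 1) = 1) :
    (a * b) ^ (n + 1) = a := by
  rw [hab.mul_pow, pow_succ' a, mul_assoc, h, mul_one]

end Commute

namespace Gamma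

open PresentedGroup Multiplicative

variable (p : ℕ)

lemma of_zero_pow_mul_of_one_pow : (of 0 ^ p * of 1 ^ (p + 1) : Gamma p) = 1 :=
  one_of_mem (rels := GammaRels p) (.inl rfl)

lemma of_two_pow_mul_of_three_pow : (of 2 ^ p * of 3 ^ (p + 1) : Gamma p) = 1 :=
  one_of_mem (rels := GammaRels p) (.inr (.inl rfl))

lemma of_zero_mul_of_one : (of 0 * of 1 : Gamma p) = of 2 * of 3 :=
  mul_inv_eq_one.mp (one_of_mem (rels := GammaRels p) (.inr (.inr (.inl rfl))))

/-- The weights of the generators `u, v, x, y` of `Γ_p`: their images in `ℤ` under the homomorphism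
`Gamma.degree`. -/
def weight : Fin 4 → ℤ :=
  ![p + 1, -p, p + 1, -p]

variable {p} in
lemma lift_weight_eq_one {r : FreeGroup (Fin 4)} (hr : r ∈ GammaRels p) :
    FreeGroup.lift (fun i ↦ ofAdd (weight p i)) r = 1 := by
  apply toAdd.injective
  rcases hr with rfl | rfl | rfl | rfl <;> simp [weight] <;> ring

/-- The homomorphism `Γ_p → ℤ`, written multiplicatively, that induces the isomorphism of the
abelianization with `ℤ`. -/
def degree : Gamma p →* Multiplicative ℤ :=
  toGroup fun _ ↦ lift_weight_eq_one

lemma degree_of (i : Fin 4) : degree p (of i) = ofAdd (weight p i) :=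
  toGroup.of _

lemma degree_of_zero_mul_of_one : degree p (of 0 * of 1) = ofAdd 1 := by
  rw [map_mul, degree_of, degree_of, ← ofAdd_add]
  simp [weight]

variable {p} {A : Type*} [CommGroup A]

lemma map_of_eq_zpow_weight (φ : Gamma p →* A) (i : Fin 4) :
    φ (of i) = φ (of 0 * of 1) ^ weight p i := by
  have zpow_of_relation {a b : A} (h : a ^ p * b ^ (p + 1) = 1) :
      a = (a * b) ^ (p + 1 : ℤ) ∧ b = (a * b) ^ (-p : ℤ) := by
    constructor
    · exact_mod_cast (mul_pow_succ_eq_left_of_commute (.all a b) h).symm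
    · rw [zpow_neg, zpow_natCast]
      exact eq_inv_of_mul_eq_one_right (mul_pow_mul_right_eq_one_of_commute (.all a b) h)
  obtain ⟨hu, hv⟩ := zpow_of_relation (a := φ (of 0)) (b := φ (of 1)) <| by
    simpa only [map_mul, map_pow, map_one] using congrArg φ (of_zero_pow_mul_of_one_pow p)
  obtain ⟨hx, hy⟩ := zpow_of_relation (a := φ (of 2)) (b := φ (of 3)) <| by
    simpa only [map_mul, map_pow, map_one] using congrArg φ (of_two_pow_mul_of_three_pow p)
  rw [← map_mul] at hu hv hx hy
  rw [← of_zero_mul_of_one] at hx hy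
  fin_cases i
  exacts [hu, hv, hx, hy]

lemma zpowersHom_comp_degree (φ : Gamma p →* A) :
    (zpowersHom A (φ (of 0 * of 1))).comp (degree p) = φ := by
  ext i
  rw [MonoidHom.comp_apply, degree_of, zpowersHom_apply, toAdd_ofAdd, ← map_of_eq_zpow_weight]

variable (p) in
/-- The isomorphism of the abelianization of `Γ_p` with `ℤ`, written multiplicatively, induced by
`Gamma.degree`; its inverse sends `1 : ℤ` to the class of `u * v`. -/
def abelianizationEquivInt : Abelianization (Gamma p) ≃* Multiplicative ℤ :=
  MonoidHom.toMulEquiv (Abelianization.lift (degree p))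
    (zpowersHom _ (Abelianization.of (of 0 * of 1)))
    (Abelianization.hom_ext _ _ (zpowersHom_comp_degree Abelianization.of))
    (MonoidHom.ext_mint <| by
      rw [MonoidHom.comp_apply, zpowersHom_apply, toAdd_ofAdd, zpow_one,
        Abelianization.lift_apply_of, degree_of_zero_mul_of_one, MonoidHom.id_apply])

end Gamma

/-- For `p ≥ 2`, the abelianization of `Γ_p` is infinite cyclic. -/
theorem gamma_abelianization_isomorphic_int (p : ℕ) (hp : 2 ≤ p) :
    Nonempty (Abelianization (Gamma p) ≃* Multiplicative ℤ) :=
  ⟨Gamma.abelianizationEquivInt p⟩
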